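/- arXiv:1902.10970 — 3 statements merged into one kernel-verified Lean document; each statement's English description precedes it below -/
import Mathlib

section
/- Let Ω be a bounded domain in ℝ⁴ containing the origin and let R ≥ R_Ω. Then for every u ∈ C₀^∞(Ω \ {0}), setting v(x) := E₁(|x|/R)^{−1/2} · u(x), one has ∫_Ω (Δu)² dx − ∫_Ω u(x)² / ( |x|⁴ · E₁(|x|/R)² ) dx ≥ 3 · ∫_Ω E₁(|x|/R) · |∇v(x)|² / |x|² dx. -/
/-!
In logarithmic polar coordinates the measure `|x|⁻⁴ dx` on `ℝ⁴ \ {0}` is a product measure, and it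
is invariant under the flows of the four linear vector fields `x ↦ x`, `x ↦ J₁ x`, `x ↦ J₂ x`,
`x ↦ J₃ x`, where the `Jₐ` are the imaginary quaternion units. At each point these fields form an
orthogonal frame of vectors of length `|x|`. Writing `T`, `X₁`, `X₂`, `X₃` for the corresponding
derivations, one has `[T, Xₐ] = 0`, `[X₁, X₂] = -2 X₃` and its cyclic analogues, and

* `|x|² |∇v|² = (T v)² + ∑ (Xₐ v)²` (`norm_gradient_frame`),
* `|x|² Δu = T² u + 2 T u + ∑ Xₐ² u` (`lap_frame`),
* `∫ |x|⁻⁴ Y f = 0` for each of the four derivations `Y` and each test function `f`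
  supported away from the origin (`Adm.integral_along`).

Hence integration by parts is algebra modulo functions `Q` with `∫ |x|⁻⁴ Q = 0` (`Null`). Modulo
such functions,

* `(∑ Xₐ² u)² ≥ 3 ∑ (Xₐ u)²` (`spherical`), a Bochner argument: the cross terms
  `∑_{a<b} Xₐ² u X_b² u` equal the squares of the off-diagonal entries of the symmetrised Hessian
  plus `∑ (Xₐ u)²`, while the diagonal squares dominate the cross terms;
* `(|x|² Δu)² ≥ 4 (T u)² + (∑ Xₐ² u)²` (see `cylinder`), the other cross terms being null or squares;
* `E₁ (T v)² = (T u)² - u² / (4 E₁²)` (in `pointwise`), since `T E₁ = -1`, while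
  `E₁ (Xₐ v)² = (Xₐ u)²` because `E₁` is radial.

Together, `(|x|² Δu)² ≥ 4 E₁ (T v)² + u² / E₁² + 3 E₁ ∑ (Xₐ v)²` modulo null functions, which is
more than needed.
-/

open MeasureTheory Real

/-- `E₁(t) = 1 - ln t`. -/
noncomputable def E1 (t : ℝ) : ℝ := 1 - Real.log t

/-- `E₂(t) = ln (e E₁(t)) = 1 + ln E₁(t)`. -/
noncomputable def E2 (t : ℝ) : ℝ := 1 + Real.log (E1 t)

/-- The Euclidean Laplacian of a scalar function on `ℝⁿ`. -/
noncomputable def lap {n : ℕ} (f : EuclideanSpace ℝ (Fin n) → ℝ) :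
    EuclideanSpace ℝ (Fin n) → ℝ := fun x =>
  ∑ i, fderiv ℝ (fun y => fderiv ℝ f y (EuclideanSpace.single i 1)) x (EuclideanSpace.single i 1)

open scoped ContDiff

local notation "ℝ⁴" => EuclideanSpace ℝ (Fin 4)

/-! ### Test functions and derivatives along vector fields -/

/-- Test functions on `U`: functions smooth on all of `ℝ⁴` whose support is compact and contained
in `U`. -/
structure Adm (U : Set ℝ⁴) (f : ℝ⁴ → ℝ) : Prop where
  smooth : ContDiff ℝ ∞ f
  compact : HasCompactSupport f
  supp : tsupport f ⊆ U

/-- The derivative of `f` along the vector field `X`, at `x` equal to `Df(x) (X x)`. -/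
noncomputable def along (X : ℝ⁴ → ℝ⁴) (f : ℝ⁴ → ℝ) : ℝ⁴ → ℝ := fun x => fderiv ℝ f x (X x)

namespace Adm

variable {U : Set ℝ⁴} {f g : ℝ⁴ → ℝ}

theorem diff (hf : Adm U f) (x : ℝ⁴) : DifferentiableAt ℝ f x :=
  hf.smooth.contDiffAt.differentiableAt (by simp)

theorem integrable (hf : Adm U f) : Integrable f :=
  hf.smooth.continuous.integrable_of_hasCompactSupport hf.compact

theorem zero_of_notMem (hf : Adm U f) {x : ℝ⁴} (hx : x ∉ U) : f x = 0 :=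
  image_eq_zero_of_notMem_tsupport fun h => hx (hf.supp h)

theorem fderiv_zero_of_notMem (hf : Adm U f) {x : ℝ⁴} (hx : x ∉ U) : fderiv ℝ f x = 0 :=
  image_eq_zero_of_notMem_tsupport fun h => hx (hf.supp (tsupport_fderiv_subset ℝ h))

theorem adm_along (hf : Adm U f) {X : ℝ⁴ → ℝ⁴} (hX : ContDiff ℝ ∞ X) : Adm U (along X f) := by
  have hs : tsupport (along X f) ⊆ tsupport f := by
    refine closure_minimal (fun x hx => ?_) (isClosed_tsupport f)
    by_contra h
    apply hx
    have : fderiv ℝ f x = 0 :=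
      image_eq_zero_of_notMem_tsupport fun h' => h (tsupport_fderiv_subset ℝ h')
    simp [along, this]
  refine ⟨?_, hf.compact.of_isClosed_subset (isClosed_tsupport _) hs, hs.trans hf.supp⟩
  exact (hf.smooth.fderiv_right (m := ∞) (by simp)).clm_apply hX

/-- A weight only has to be smooth on `U`: the product vanishes near every point outside the
support of `f`. -/
theorem weight (hU : IsOpen U) (hf : Adm U f) (hg : ContDiffOn ℝ ∞ g U) :
    Adm U (fun x => g x * f x) := by
  have hs : tsupport (fun x => g x * f x) ⊆ tsupport f := tsupport_mul_subset_right
  refine ⟨?_, hf.compact.mul_left, hs.trans hf.supp⟩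
  rw [contDiff_iff_contDiffAt]
  intro x
  by_cases hx : x ∈ tsupport f
  · exact (hg.contDiffAt (hU.mem_nhds (hf.supp hx))).mul hf.smooth.contDiffAt
  · have : (fun x => g x * f x) =ᶠ[nhds x] fun _ => 0 := by
      rw [notMem_tsupport_iff_eventuallyEq] at hx
      filter_upwards [hx] with y hy
      simp [hy]
    exact contDiffAt_const.congr_of_eventuallyEq this

theorem mul (hf : Adm U f) (hg : Adm U g) : Adm U (fun x => f x * g x) :=
  ⟨hf.smooth.mul hg.smooth, hf.compact.mul_right, tsupport_mul_subset_left.trans hf.supp⟩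

theorem add (hf : Adm U f) (hg : Adm U g) : Adm U (fun x => f x + g x) :=
  ⟨hf.smooth.add hg.smooth, hf.compact.add hg.compact,
    (tsupport_add f g).trans (Set.union_subset hf.supp hg.supp)⟩

theorem const_mul (hf : Adm U f) (c : ℝ) : Adm U (fun x => c * f x) :=
  ⟨contDiff_const.mul hf.smooth, hf.compact.mul_left, tsupport_mul_subset_right.trans hf.supp⟩

theorem integral_fderiv (hf : Adm U f) (w : ℝ⁴) : ∫ x, fderiv ℝ f x w = 0 := by
  have h1 : Adm U (along (fun _ => w) f) := hf.adm_along contDiff_const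
  have := integral_mul_fderiv_eq_neg_fderiv_mul_of_integrable (μ := volume) (𝕜 := ℝ)
    (f := fun _ : ℝ⁴ => (1 : ℝ)) (g := f) (v := w) (by simp)
    (by simp only [one_mul]; exact h1.integrable) (by simpa using hf.integrable)
    (by simp) (fun x _ => hf.diff x)
  simpa using this

end Adm

/-! ### Invariance of the measure `|x|⁻⁴ dx` -/

theorem hasFDerivAt_weight {x : ℝ⁴} (hx : x ≠ 0) :
    HasFDerivAt (fun y : ℝ⁴ => (‖y‖ ^ 4)⁻¹) ((-4 * (‖x‖ ^ 6)⁻¹) • innerSL ℝ x) x := by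
  have hn : ‖x‖ ≠ 0 := by simpa using hx
  have h1 : HasFDerivAt (fun y : ℝ⁴ => ‖y‖ ^ 2) (2 • innerSL ℝ x) x := by
    simpa using (hasStrictFDerivAt_norm_sq x).hasFDerivAt
  have h2 : HasDerivAt (fun t : ℝ => (t ^ 2)⁻¹) (-(2 * ‖x‖ ^ 2) / ((‖x‖ ^ 2) ^ 2) ^ 2)
      (‖x‖ ^ 2) := by
    simpa using (hasDerivAt_pow 2 (‖x‖ ^ 2)).fun_inv (by positivity)
  have h3 := h2.comp_hasFDerivAt x h1
  have e1 : (fun y : ℝ⁴ => (‖y‖ ^ 4)⁻¹) = (fun t : ℝ => (t ^ 2)⁻¹) ∘ fun y : ℝ⁴ => ‖y‖ ^ 2 := by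
    ext y
    simp only [Function.comp]
    ring
  have e2 : (-4 * (‖x‖ ^ 6)⁻¹) • innerSL ℝ x
      = (-(2 * ‖x‖ ^ 2) / ((‖x‖ ^ 2) ^ 2) ^ 2) • 2 • innerSL ℝ x := by
    ext w
    simp
    field_simp
    ring
  rw [e1, e2]
  exact h3

theorem contDiffOn_norm_weight {U : Set ℝ⁴} (h0 : (0 : ℝ⁴) ∉ U) (n : ℕ) :
    ContDiffOn ℝ ∞ (fun y : ℝ⁴ => (‖y‖ ^ n)⁻¹) U := by
  intro x hx
  have hx0 : x ≠ 0 := fun h => h0 (h ▸ hx)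
  exact (((contDiffAt_norm ℝ hx0).pow n).inv (by simp [hx0])).contDiffWithinAt

theorem fderiv_eq_sum (f : ℝ⁴ → ℝ) (x w : ℝ⁴) :
    fderiv ℝ f x w = ∑ i, w i * fderiv ℝ f x (EuclideanSpace.single i 1) := by
  have : w = ∑ i, w i • EuclideanSpace.single i (1 : ℝ) := by
    ext j
    simp [Finset.sum_apply, Pi.single_apply]
  conv_lhs => rw [this]
  simp

/-- The hypothesis on `A` says that `x ↦ |x|⁻⁴ A x` is divergence free away from the origin, so
`|x|⁻⁴ A f` is the divergence of the compactly supported field `|x|⁻⁴ f(x) A x`. -/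
theorem Adm.integral_along {U : Set ℝ⁴} (hU : IsOpen U) (h0 : (0 : ℝ⁴) ∉ U) {f : ℝ⁴ → ℝ} (hf : Adm U f)
    (A : ℝ⁴ →L[ℝ] ℝ⁴)
    (hA : ∀ x : ℝ⁴, (∑ i, A (EuclideanSpace.single i 1) i) * ‖x‖ ^ 2 = 4 * ∑ i, A x i * x i) :
    ∫ x, (‖x‖ ^ 4)⁻¹ * along A f x = 0 := by
  have hc : ∀ i, Adm U (fun x => (‖x‖ ^ 4)⁻¹ * (A x i * f x)) := fun i =>
    (hf.weight (g := fun x => A x i) hU (by fun_prop)).weight hU (contDiffOn_norm_weight h0 4)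
  have key : ∀ x, (‖x‖ ^ 4)⁻¹ * along A f x = ∑ i, fderiv ℝ (fun x => (‖x‖ ^ 4)⁻¹ * (A x i * f x)) x
      (EuclideanSpace.single i 1) := by
    intro x
    by_cases hx : x ∈ U
    · have hx0 : x ≠ 0 := fun h => h0 (h ▸ hx)
      have hn : ‖x‖ ≠ 0 := by simpa using hx0
      have hd : ∀ i, fderiv ℝ (fun x => (‖x‖ ^ 4)⁻¹ * (A x i * f x)) x
          (EuclideanSpace.single i 1) = (‖x‖ ^ 4)⁻¹ * (A x i * fderiv ℝ f x (EuclideanSpace.single i 1))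
            + (‖x‖ ^ 4)⁻¹ * A (EuclideanSpace.single i 1) i * f x
            - 4 * (‖x‖ ^ 6)⁻¹ * (A x i * x i) * f x := by
        intro i
        have h1 : HasFDerivAt (fun y => A y i) ((EuclideanSpace.proj i).comp A) x :=
          ((EuclideanSpace.proj (𝕜 := ℝ) i).comp A).hasFDerivAt
        have h2 := (hasFDerivAt_weight hx0).mul (h1.mul (hf.diff x).hasFDerivAt)
        have h3 : fderiv ℝ (fun x => (‖x‖ ^ 4)⁻¹ * (A x i * f x)) x = _ := h2.fderiv
        rw [h3]
        simp [EuclideanSpace.inner_single_right]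
        ring
      simp_rw [hd]
      rw [Finset.sum_sub_distrib, Finset.sum_add_distrib, ← Finset.mul_sum, ← Finset.sum_mul,
        ← Finset.sum_mul, ← Finset.mul_sum, ← Finset.mul_sum, ← fderiv_eq_sum f x (A x)]
      have := hA x
      have h4 : (‖x‖ ^ 4)⁻¹ = (‖x‖ ^ 6)⁻¹ * ‖x‖ ^ 2 := by field_simp
      unfold along
      linear_combination (-1) * (‖x‖ ^ 6)⁻¹ * f x * this - (∑ i, A (EuclideanSpace.single i 1) i) * f x * h4
    · rw [(hf.adm_along A.contDiff).zero_of_notMem hx]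
      symm
      simp [(hc _).fderiv_zero_of_notMem hx]
  simp_rw [key]
  rw [integral_finsetSum (f := fun i x => fderiv ℝ (fun x => (‖x‖ ^ 4)⁻¹ * (A x i * f x)) x
    (EuclideanSpace.single i 1)) _ fun i _ => ((hc i).adm_along (X := fun _ => EuclideanSpace.single i 1)
    contDiff_const).integrable]
  exact Finset.sum_eq_zero fun i _ => (hc i).integral_fderiv _

/-! ### Commutators and the product rule -/

theorem minSmoothness_two_le : minSmoothness ℝ 2 ≤ ∞ := by
  rw [minSmoothness_of_isRCLikeNormedField]
  exact WithTop.coe_le_coe.mpr (le_top : (2 : ℕ∞) ≤ ⊤)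

theorem along_along {f : ℝ⁴ → ℝ} (hf : ContDiff ℝ ∞ f) (A B : ℝ⁴ →L[ℝ] ℝ⁴) (x : ℝ⁴) :
    along A (along B f) x = fderiv ℝ (fderiv ℝ f) x (A x) (B x) + fderiv ℝ f x (B (A x)) := by
  have h : HasFDerivAt (fderiv ℝ f) (fderiv ℝ (fderiv ℝ f) x) x :=
    ((hf.fderiv_right (m := ∞) (by simp)).contDiffAt.differentiableAt (by simp)).hasFDerivAt
  have h2 := h.clm_apply B.hasFDerivAt
  have h3 : fderiv ℝ (along B f) x = _ := h2.fderiv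
  show fderiv ℝ (along B f) x (A x) = _
  rw [h3]
  simp
  ring

/-- The commutator of the derivations given by `A` and `B` is the one given by `B A - A B`. -/
theorem along_comm {f : ℝ⁴ → ℝ} (hf : ContDiff ℝ ∞ f) (A B : ℝ⁴ →L[ℝ] ℝ⁴) (x : ℝ⁴) :
    along A (along B f) x = along B (along A f) x + fderiv ℝ f x (B (A x) - A (B x)) := by
  rw [along_along hf, along_along hf, map_sub,
    (hf.contDiffAt.isSymmSndFDerivAt minSmoothness_two_le).eq (A x) (B x)]
  ring

theorem along_mul {f g : ℝ⁴ → ℝ} {x : ℝ⁴} (hf : DifferentiableAt ℝ f x) (hg : DifferentiableAt ℝ g x)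
    (X : ℝ⁴ → ℝ⁴) : along X (fun y => f y * g y) x = along X f x * g x + f x * along X g x := by
  simp only [along]
  rw [fderiv_fun_mul hf hg]
  simp
  ring

/-! ### The quaternionic frame -/

/-- The linear field `x ↦ A x` preserves the measure `|x|⁻⁴ dx`: its divergence
`tr A - 4 ⟪A x, x⟫ / |x|²` with respect to that measure vanishes, stated without division. -/
def WDivFree (A : ℝ⁴ →L[ℝ] ℝ⁴) : Prop :=
  ∀ x : ℝ⁴, (∑ i, A (EuclideanSpace.single i 1) i) * ‖x‖ ^ 2 = 4 * ∑ i, A x i * x i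

/-- The Euler field `x ↦ x`; the derivation `along T` is `r ∂ᵣ`. -/
noncomputable def T : ℝ⁴ →L[ℝ] ℝ⁴ := ContinuousLinearMap.id ℝ ℝ⁴

/-- The first imaginary quaternion unit, `ℝ⁴` being identified with the quaternions. -/
noncomputable def J₁ : ℝ⁴ →L[ℝ] ℝ⁴ := (Matrix.toEuclideanLin
  !![0, -1, 0, 0; 1, 0, 0, 0; 0, 0, 0, -1; 0, 0, 1, 0]).toContinuousLinearMap

/-- The second imaginary quaternion unit. -/
noncomputable def J₂ : ℝ⁴ →L[ℝ] ℝ⁴ := (Matrix.toEuclideanLin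
  !![0, 0, -1, 0; 0, 0, 0, 1; 1, 0, 0, 0; 0, -1, 0, 0]).toContinuousLinearMap

/-- The third imaginary quaternion unit, equal to `J₁ J₂`. -/
noncomputable def J₃ : ℝ⁴ →L[ℝ] ℝ⁴ := (Matrix.toEuclideanLin
  !![0, 0, 0, -1; 0, 0, -1, 0; 0, 1, 0, 0; 1, 0, 0, 0]).toContinuousLinearMap

theorem T_apply (x : ℝ⁴) : T x = x := rfl

theorem J₁_apply (x : ℝ⁴) : J₁ x = !₂[-x 1, x 0, -x 3, x 2] := by
  ext i
  fin_cases i <;> simp [J₁, Matrix.toLpLin_apply, dotProduct, Fin.sum_univ_four]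

theorem J₂_apply (x : ℝ⁴) : J₂ x = !₂[-x 2, x 3, x 0, -x 1] := by
  ext i
  fin_cases i <;> simp [J₂, Matrix.toLpLin_apply, dotProduct, Fin.sum_univ_four]

theorem J₃_apply (x : ℝ⁴) : J₃ x = !₂[-x 3, -x 2, x 1, x 0] := by
  ext i
  fin_cases i <;> simp [J₃, Matrix.toLpLin_apply, dotProduct, Fin.sum_univ_four]

theorem norm_sq_four (x : ℝ⁴) : ‖x‖ ^ 2 = x 0 ^ 2 + x 1 ^ 2 + x 2 ^ 2 + x 3 ^ 2 := by
  simp [EuclideanSpace.norm_sq_eq, Fin.sum_univ_four]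

theorem wdivFree_T : WDivFree T := by
  intro x
  simp [T_apply, norm_sq_four, Fin.sum_univ_four]
  ring

theorem wdivFree_J₁ : WDivFree J₁ := by
  intro x
  simp [J₁_apply, norm_sq_four, Fin.sum_univ_four]
  ring

theorem wdivFree_J₂ : WDivFree J₂ := by
  intro x
  simp [J₂_apply, norm_sq_four, Fin.sum_univ_four]
  ring

theorem wdivFree_J₃ : WDivFree J₃ := by
  intro x
  simp [J₃_apply, norm_sq_four, Fin.sum_univ_four]
  ring

/-! ### Integration by parts modulo null functions -/

/-- Functions that are integrable with integral zero for the measure `|x|⁻⁴ dx`. -/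
structure Null (Q : ℝ⁴ → ℝ) : Prop where
  int : Integrable fun x => (‖x‖ ^ 4)⁻¹ * Q x
  zero : ∫ x, (‖x‖ ^ 4)⁻¹ * Q x = 0

namespace Null

variable {P Q : ℝ⁴ → ℝ}

theorem add (hP : Null P) (hQ : Null Q) : Null (fun x => P x + Q x) := by
  constructor
  · simp only [mul_add]
    exact hP.int.add hQ.int
  · simp only [mul_add]
    rw [integral_add hP.int hQ.int, hP.zero, hQ.zero, add_zero]

theorem const_mul (hP : Null P) (c : ℝ) : Null (fun x => c * P x) := by
  have : ∀ x : ℝ⁴, (‖x‖ ^ 4)⁻¹ * (c * P x) = c * ((‖x‖ ^ 4)⁻¹ * P x) := fun x => by ring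
  constructor
  · simpa only [this] using hP.int.const_mul c
  · simp only [this]
    rw [integral_const_mul, hP.zero, mul_zero]

end Null

/-- Integration by parts, in the form that `A (p q)` is null. -/
theorem null_along {U : Set ℝ⁴} (hU : IsOpen U) (h0 : (0 : ℝ⁴) ∉ U) {p q : ℝ⁴ → ℝ}
    (hp : Adm U p) (hq : Adm U q) {A : ℝ⁴ →L[ℝ] ℝ⁴} (hA : WDivFree A) :
    Null (fun x => along A p x * q x + p x * along A q x) := by
  have h : (fun x => along A p x * q x + p x * along A q x) = along A (fun x => p x * q x) := by
    ext x
    rw [along_mul (hp.diff x) (hq.diff x)]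
  rw [h]
  exact ⟨(((hp.mul hq).adm_along A.contDiff).weight hU (contDiffOn_norm_weight h0 4)).integrable,
    (hp.mul hq).integral_along hU h0 A hA⟩

theorem along_T_comm {f : ℝ⁴ → ℝ} (hf : ContDiff ℝ ∞ f) (A : ℝ⁴ →L[ℝ] ℝ⁴) (x : ℝ⁴) :
    along T (along A f) x = along A (along T f) x := by
  rw [along_comm hf]
  simp [T_apply]

theorem along_J₁₂ {f : ℝ⁴ → ℝ} (hf : ContDiff ℝ ∞ f) (x : ℝ⁴) :
    along J₁ (along J₂ f) x = along J₂ (along J₁ f) x - 2 * along J₃ f x := by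
  have h : J₂ (J₁ x) - J₁ (J₂ x) = (-2 : ℝ) • J₃ x := by
    ext i
    fin_cases i <;> simp [J₁_apply, J₂_apply, J₃_apply] <;> ring
  rw [along_comm hf, h]
  simp [along]
  ring

theorem along_J₂₃ {f : ℝ⁴ → ℝ} (hf : ContDiff ℝ ∞ f) (x : ℝ⁴) :
    along J₂ (along J₃ f) x = along J₃ (along J₂ f) x - 2 * along J₁ f x := by
  have h : J₃ (J₂ x) - J₂ (J₃ x) = (-2 : ℝ) • J₁ x := by
    ext i
    fin_cases i <;> simp [J₁_apply, J₂_apply, J₃_apply] <;> ring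
  rw [along_comm hf, h]
  simp [along]
  ring

theorem along_J₃₁ {f : ℝ⁴ → ℝ} (hf : ContDiff ℝ ∞ f) (x : ℝ⁴) :
    along J₃ (along J₁ f) x = along J₁ (along J₃ f) x - 2 * along J₂ f x := by
  have h : J₁ (J₃ x) - J₃ (J₁ x) = (-2 : ℝ) • J₂ x := by
    ext i
    fin_cases i <;> simp [J₁_apply, J₂_apply, J₃_apply] <;> ring
  rw [along_comm hf, h]
  simp [along]
  ring

/-- Integrated version of `(Δ_S u)² ≥ 3 |∇_S u|²` on the unit sphere `S³`, where
`Δ_S = J₁² + J₂² + J₃²` as derivations. -/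
theorem spherical {U : Set ℝ⁴} (hU : IsOpen U) (h0 : (0 : ℝ⁴) ∉ U) {u : ℝ⁴ → ℝ} (hu : Adm U u) :
    ∃ Q, Null Q ∧ ∀ x, 3 * (along J₁ u x ^ 2 + along J₂ u x ^ 2 + along J₃ u x ^ 2) + Q x ≤
      (along J₁ (along J₁ u) x + along J₂ (along J₂ u) x + along J₃ (along J₃ u) x) ^ 2 := by
  have a1 := hu.adm_along J₁.contDiff
  have a2 := hu.adm_along J₂.contDiff
  have a3 := hu.adm_along J₃.contDiff
  have n := @null_along U hU h0
  -- moves both derivatives: `A²u B²u = (A B u) (B A u) + Au [B, A] B u` modulo null functions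
  have pair : ∀ {A B : ℝ⁴ →L[ℝ] ℝ⁴}, WDivFree A → WDivFree B → Null (fun x =>
      (along A (along A u) x * along B (along B u) x
        + along A u x * along A (along B (along B u)) x)
      + -1 * (along B (along A u) x * along A (along B u) x
        + along A u x * along B (along A (along B u)) x)) := by
    intro A B hA hB
    have hAu := hu.adm_along A.contDiff
    have hBu := hu.adm_along B.contDiff
    exact (n hAu (hBu.adm_along B.contDiff) hA).add
      ((n hAu (hBu.adm_along A.contDiff) hB).const_mul (-1))
  -- the commutator terms `u₁ u₃₂ + u₂ u₁₃ + u₃ u₂₁` symmetrise to these derivatives of products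
  have cyc := ((n a2 a3 wdivFree_J₁).add (n a1 a3 wdivFree_J₂)).add (n a1 a2 wdivFree_J₃)
  refine ⟨_, (((pair wdivFree_J₁ wdivFree_J₂).add (pair wdivFree_J₂ wdivFree_J₃)).add
    ((pair wdivFree_J₃ wdivFree_J₁).add cyc)).const_mul 3, fun x => ?_⟩
  have e1 := along_J₁₂ a2.smooth x
  have e2 := along_J₂₃ a3.smooth x
  have e3 := along_J₃₁ a1.smooth x
  have f1 := along_J₁₂ hu.smooth x
  have f2 := along_J₂₃ hu.smooth x
  have f3 := along_J₃₁ hu.smooth x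
  beta_reduce
  rw [e1, e2, e3, f1, f2, f3]
  set u11 := along J₁ (along J₁ u) x
  set u22 := along J₂ (along J₂ u) x
  set u33 := along J₃ (along J₃ u) x
  set u21 := along J₂ (along J₁ u) x
  set u32 := along J₃ (along J₂ u) x
  set u13 := along J₁ (along J₃ u) x
  set u1 := along J₁ u x
  set u2 := along J₂ u x
  set u3 := along J₃ u x
  -- `u21 - u3` and its analogues are the off-diagonal entries of the symmetrised Hessian
  nlinarith [sq_nonneg (u21 - u3), sq_nonneg (u32 - u1), sq_nonneg (u13 - u2),
    sq_nonneg (u11 - u22), sq_nonneg (u22 - u33), sq_nonneg (u33 - u11)]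

/-- The cross terms between the radial part `T²u + 2 T u` and `A²u`: modulo null functions the first
one is `2 (A T u)²` and the second one vanishes. -/
theorem cyl_term {U : Set ℝ⁴} (hU : IsOpen U) (h0 : (0 : ℝ⁴) ∉ U) {u : ℝ⁴ → ℝ} (hu : Adm U u)
    {A : ℝ⁴ →L[ℝ] ℝ⁴} (hA : WDivFree A) :
    ∃ Q, Null Q ∧ ∀ x, Q x ≤ 2 * along T (along T u) x * along A (along A u) x
      + 4 * along T u x * along A (along A u) x := by
  have b := hu.adm_along T.contDiff
  have a := b.adm_along T.contDiff
  have ua := hu.adm_along A.contDiff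
  have ba := b.adm_along A.contDiff
  have n := @null_along U hU h0
  refine ⟨_, (((n b ua hA).const_mul 4).add ((n ua ua wdivFree_T).const_mul (-2))).add
    (((n a ua hA).const_mul 2).add ((n ba ua wdivFree_T).const_mul (-2))), fun x => ?_⟩
  beta_reduce
  rw [along_T_comm hu.smooth, along_T_comm b.smooth]
  nlinarith [sq_nonneg (along A (along T u) x)]

/-- Lower bound for `(|x|² Δu)²` modulo null functions, with `|x|² Δu` written in the frame. -/
theorem cylinder {U : Set ℝ⁴} (hU : IsOpen U) (h0 : (0 : ℝ⁴) ∉ U) {u : ℝ⁴ → ℝ} (hu : Adm U u) :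
    ∃ Q, Null Q ∧ ∀ x, 4 * along T u x ^ 2
        + 3 * (along J₁ u x ^ 2 + along J₂ u x ^ 2 + along J₃ u x ^ 2) + Q x ≤
      (along T (along T u) x + 2 * along T u x + (along J₁ (along J₁ u) x
        + along J₂ (along J₂ u) x + along J₃ (along J₃ u) x)) ^ 2 := by
  have b := hu.adm_along T.contDiff
  obtain ⟨Q1, n1, h1⟩ := cyl_term hU h0 hu wdivFree_J₁
  obtain ⟨Q2, n2, h2⟩ := cyl_term hU h0 hu wdivFree_J₂
  obtain ⟨Q3, n3, h3⟩ := cyl_term hU h0 hu wdivFree_J₃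
  obtain ⟨Q4, n4, h4⟩ := spherical hU h0 hu
  refine ⟨_, ((n1.add n2).add (n3.add n4)).add ((null_along hU h0 b b wdivFree_T).const_mul 2),
    fun x => ?_⟩
  beta_reduce
  nlinarith [h1 x, h2 x, h3 x, h4 x, sq_nonneg (along T (along T u) x)]

/-! ### Gradient and Laplacian in the frame -/

theorem norm_gradient_frame (v : ℝ⁴ → ℝ) (x : ℝ⁴) :
    ‖x‖ ^ 2 * ‖gradient v x‖ ^ 2
      = along T v x ^ 2 + along J₁ v x ^ 2 + along J₂ v x ^ 2 + along J₃ v x ^ 2 := by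
  have h : ∀ w, fderiv ℝ v x w = ∑ i, w i * gradient v x i := by
    intro w
    have := InnerProductSpace.toDual_symm_apply (𝕜 := ℝ) (x := w) (y := fderiv ℝ v x)
    rw [← this]
    rw [PiLp.inner_apply]
    simp [gradient]
  simp only [along, h]
  rw [norm_sq_four, norm_sq_four]
  simp [T_apply, J₁_apply, J₂_apply, J₃_apply, Fin.sum_univ_four]
  ring

theorem lap_frame {u : ℝ⁴ → ℝ} (hu : ContDiff ℝ ∞ u) (x : ℝ⁴) :
    ‖x‖ ^ 2 * lap u x = along T (along T u) x + 2 * along T u x + (along J₁ (along J₁ u) x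
        + along J₂ (along J₂ u) x + along J₃ (along J₃ u) x) := by
  have h : HasFDerivAt (fderiv ℝ u) (fderiv ℝ (fderiv ℝ u) x) x :=
    ((hu.fderiv_right (m := ∞) (by simp)).contDiffAt.differentiableAt (by simp)).hasFDerivAt
  have hl : ∀ w, fderiv ℝ (fun y => fderiv ℝ u y w) x w = fderiv ℝ (fderiv ℝ u) x w w := by
    intro w
    rw [(h.clm_apply (hasFDerivAt_const w x)).fderiv]
    simp
  have q1 : J₁ (J₁ x) = -x := by
    ext i; fin_cases i <;> simp [J₁_apply]
  have q2 : J₂ (J₂ x) = -x := by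
    ext i; fin_cases i <;> simp [J₂_apply]
  have q3 : J₃ (J₃ x) = -x := by
    ext i; fin_cases i <;> simp [J₃_apply]
  have hs := (hu.contDiffAt (x := x)).isSymmSndFDerivAt minSmoothness_two_le
  have hb : ∀ v w, fderiv ℝ (fderiv ℝ u) x v w = ∑ i, ∑ j, v i * w j *
      fderiv ℝ (fderiv ℝ u) x (EuclideanSpace.single i 1) (EuclideanSpace.single j 1) := by
    intro v w
    have e : ∀ w : ℝ⁴, w = ∑ i, w i • EuclideanSpace.single i (1 : ℝ) := by
      intro w
      ext j
      simp [Finset.sum_apply, Pi.single_apply]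
    conv_lhs => rw [e v, e w]
    simp only [map_sum, map_smul, sum_apply, smul_apply, smul_eq_mul, Finset.mul_sum, mul_assoc]
    rw [Finset.sum_comm]
    exact Finset.sum_congr rfl fun i _ => Finset.sum_congr rfl fun j _ => by ring
  simp only [along_along hu, T_apply, q1, q2, q3, map_neg]
  have hT : along T u x = fderiv ℝ u x x := rfl
  rw [hT, norm_sq_four]
  simp only [lap, hl]
  rw [hb x x, hb (J₁ x), hb (J₂ x), hb (J₃ x)]
  simp only [J₁_apply, J₂_apply, J₃_apply, Fin.sum_univ_four]
  have s := fun i j : Fin 4 => hs.eq (EuclideanSpace.single i (1 : ℝ)) (EuclideanSpace.single j 1)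
  rw [s 1 0, s 2 0, s 3 0, s 2 1, s 3 1, s 3 2]
  simp
  ring

/-! ### The logarithmic weight -/

theorem hasFDerivAt_E1 {R : ℝ} (hR : 0 < R) {x : ℝ⁴} (hx : x ≠ 0) :
    HasFDerivAt (fun y : ℝ⁴ => E1 (‖y‖ / R)) (-(‖x‖ ^ 2)⁻¹ • innerSL ℝ x) x := by
  have hn : ‖x‖ ≠ 0 := by simpa using hx
  have h1 : HasFDerivAt (fun y : ℝ⁴ => ‖y‖ ^ 2) (2 • innerSL ℝ x) x := by
    simpa using (hasStrictFDerivAt_norm_sq x).hasFDerivAt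
  have h2 := ((h1.log (by positivity)).const_mul (1 / 2)).const_sub (1 + Real.log R)
  have h3 : HasFDerivAt (fun y : ℝ⁴ => E1 (‖y‖ / R))
      (-((1 / 2 : ℝ) • (‖x‖ ^ 2)⁻¹ • 2 • innerSL ℝ x)) x := by
    refine h2.congr_of_eventuallyEq ?_
    filter_upwards [isOpen_ne.mem_nhds hx] with y hy
    have hy' : ‖y‖ ≠ 0 := by simpa using hy
    simp only [E1]
    rw [Real.log_div hy' hR.ne', Real.log_pow]
    push_cast
    ring
  have e : -(‖x‖ ^ 2)⁻¹ • innerSL ℝ x = -((1 / 2 : ℝ) • (‖x‖ ^ 2)⁻¹ • 2 • innerSL ℝ x) := by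
    ext w
    simp
    ring
  rw [e]
  exact h3

theorem contDiffAt_E1 {R : ℝ} (hR : 0 < R) {x : ℝ⁴} (hx : x ≠ 0) :
    ContDiffAt ℝ ∞ (fun y : ℝ⁴ => E1 (‖y‖ / R)) x := by
  unfold E1
  refine contDiffAt_const.sub (((contDiffAt_norm ℝ hx).div_const R).log ?_)
  have : ‖x‖ ≠ 0 := by simpa using hx
  positivity

/-- Derivative of `v = E₁^(-1/2) u` along `X`. -/
theorem along_sub {R : ℝ} (hR : 0 < R) {u : ℝ⁴ → ℝ} {x : ℝ⁴} (hx : x ≠ 0)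
    (hE : 0 < E1 (‖x‖ / R)) (hu : DifferentiableAt ℝ u x) (X : ℝ⁴ → ℝ⁴) :
    along X (fun y => (E1 (‖y‖ / R)) ^ (-(1 / 2) : ℝ) * u y) x
      = E1 (‖x‖ / R) ^ (-(1 / 2) : ℝ) *
        (along X u x + inner ℝ x (X x) / (2 * ‖x‖ ^ 2 * E1 (‖x‖ / R)) * u x) := by
  have h := ((hasFDerivAt_E1 hR hx).rpow_const (p := -(1 / 2)) (Or.inl hE.ne')).mul hu.hasFDerivAt
  have h' : fderiv ℝ (fun y => (E1 (‖y‖ / R)) ^ (-(1 / 2) : ℝ) * u y) x = _ := h.fderiv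
  have hn : ‖x‖ ≠ 0 := by simpa using hx
  rw [along, h', Real.rpow_sub_one hE.ne']
  simp [along]
  field_simp

theorem along_inv {R : ℝ} (hR : 0 < R) {u : ℝ⁴ → ℝ} {x : ℝ⁴} (hx : x ≠ 0)
    (hE : 0 < E1 (‖x‖ / R)) (hu : DifferentiableAt ℝ u x) :
    along T (fun y => (E1 (‖y‖ / R))⁻¹ * u y) x
      = (E1 (‖x‖ / R))⁻¹ * along T u x + ((E1 (‖x‖ / R)) ^ 2)⁻¹ * u x := by
  have h := ((hasDerivAt_inv hE.ne').comp_hasFDerivAt x (hasFDerivAt_E1 hR hx)).mul hu.hasFDerivAt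
  have h' : fderiv ℝ (fun y => (E1 (‖y‖ / R))⁻¹ * u y) x = _ := h.fderiv
  have hn : ‖x‖ ≠ 0 := by simpa using hx
  rw [along, h']
  simp [along, T_apply]
  field_simp

/-- The estimate holds pointwise after adding `|x|⁻⁴` times a null function. -/
theorem pointwise {R : ℝ} (hR : 0 < R) {U : Set ℝ⁴} (hU : IsOpen U) (h0 : (0 : ℝ⁴) ∉ U)
    (hE : ∀ x ∈ U, 0 < E1 (‖x‖ / R)) {u : ℝ⁴ → ℝ} (hu : Adm U u) :
    Integrable (fun x => E1 (‖x‖ / R) *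
      ‖gradient (fun y => (E1 (‖y‖ / R)) ^ (-(1 / 2) : ℝ) * u y) x‖ ^ 2 / ‖x‖ ^ 2) ∧
    ∃ Q, Null Q ∧ ∀ x, 3 * (E1 (‖x‖ / R) *
        ‖gradient (fun y => (E1 (‖y‖ / R)) ^ (-(1 / 2) : ℝ) * u y) x‖ ^ 2 / ‖x‖ ^ 2)
      + (u x) ^ 2 / (‖x‖ ^ 4 * (E1 (‖x‖ / R)) ^ 2) + (‖x‖ ^ 4)⁻¹ * Q x ≤ (lap u x) ^ 2 := by
  have hne : ∀ x ∈ U, x ≠ 0 := fun x hx h => h0 (h ▸ hx)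
  have hgs : ContDiffOn ℝ ∞ (fun y : ℝ⁴ => E1 (‖y‖ / R)) U := fun x hx =>
    (contDiffAt_E1 hR (hne x hx)).contDiffWithinAt
  have hv : Adm U (fun y => (E1 (‖y‖ / R)) ^ (-(1 / 2) : ℝ) * u y) :=
    hu.weight hU (hgs.rpow_const_of_ne fun x hx => (hE x hx).ne')
  have hw : Adm U (fun y => (E1 (‖y‖ / R))⁻¹ * u y) :=
    hu.weight hU (hgs.inv fun x hx => (hE x hx).ne')
  set v : ℝ⁴ → ℝ := fun y => (E1 (‖y‖ / R)) ^ (-(1 / 2) : ℝ) * u y with hvdef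
  have hgrad : ∀ x, E1 (‖x‖ / R) * ‖gradient v x‖ ^ 2 / ‖x‖ ^ 2 = (‖x‖ ^ 4)⁻¹ *
      (E1 (‖x‖ / R) * (along T v x ^ 2 + along J₁ v x ^ 2 + along J₂ v x ^ 2
        + along J₃ v x ^ 2)) := by
    intro x
    rw [← norm_gradient_frame]
    by_cases hx : ‖x‖ = 0
    · simp [hx]
    · field_simp
  constructor
  · simp_rw [hgrad, pow_two (along _ _ _)]
    have s : ∀ A : ℝ⁴ →L[ℝ] ℝ⁴, Adm U (fun x => along A v x * along A v x) := fun A =>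
      (hv.adm_along A.contDiff).mul (hv.adm_along A.contDiff)
    exact (((((s T).add (s J₁)).add (s J₂)).add (s J₃)).weight hU hgs |>.weight hU
      (contDiffOn_norm_weight h0 4)).integrable
  · obtain ⟨Q, hQ, hq⟩ := cylinder hU h0 hu
    have hsq : ∀ x ∈ U, E1 (‖x‖ / R) * (E1 (‖x‖ / R) ^ (-(1 / 2) : ℝ)) ^ 2 = 1 := by
      intro x hx
      rw [← Real.rpow_natCast, ← Real.rpow_mul (hE x hx).le]
      norm_num
      rw [Real.rpow_neg_one, mul_inv_cancel₀ (hE x hx).ne']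
    -- the last summand is half of `T (u² / E₁)`, hence null
    have hT : ∀ x, E1 (‖x‖ / R) * along T v x ^ 2 = along T u x ^ 2
        - 1 / 4 * (u x ^ 2 / E1 (‖x‖ / R) ^ 2) + 1 / 2 * (along T u x * ((E1 (‖x‖ / R))⁻¹ * u x)
          + u x * along T (fun y => (E1 (‖y‖ / R))⁻¹ * u y) x) := by
      intro x
      by_cases hx : x ∈ U
      · have hE' := hE x hx
        have hn : ‖x‖ ≠ 0 := by simpa using hne x hx
        rw [along_inv hR (hne x hx) hE' (hu.diff x), hvdef,
          along_sub hR (hne x hx) hE' (hu.diff x), mul_pow, ← mul_assoc, hsq x hx, T_apply,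
          real_inner_self_eq_norm_sq]
        field_simp
        ring
      · rw [(hv.adm_along T.contDiff).zero_of_notMem hx, (hu.adm_along T.contDiff).zero_of_notMem hx,
          hu.zero_of_notMem hx]
        ring
    have hJ : ∀ A : ℝ⁴ →L[ℝ] ℝ⁴, (∀ x, inner ℝ x (A x) = 0) → ∀ x,
        E1 (‖x‖ / R) * along A v x ^ 2 = along A u x ^ 2 := by
      intro A hA x
      by_cases hx : x ∈ U
      · rw [hvdef, along_sub hR (hne x hx) (hE x hx) (hu.diff x), mul_pow, ← mul_assoc, hsq x hx,
          hA]
        ring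
      · rw [(hv.adm_along A.contDiff).zero_of_notMem hx, (hu.adm_along A.contDiff).zero_of_notMem hx]
        ring
    have j1 := hJ J₁ fun x => by
      rw [PiLp.inner_apply]; simp [J₁_apply, Fin.sum_univ_four]; ring
    have j2 := hJ J₂ fun x => by
      rw [PiLp.inner_apply]; simp [J₂_apply, Fin.sum_univ_four]; ring
    have j3 := hJ J₃ fun x => by
      rw [PiLp.inner_apply]; simp [J₃_apply, Fin.sum_univ_four]; ring
    refine ⟨_, hQ.add ((null_along hU h0 hu hw wdivFree_T).const_mul (-2)), fun x => ?_⟩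
    beta_reduce
    rw [hgrad]
    by_cases hx : x = 0
    · -- at the origin every term on the left is `0` because of division by zero
      subst hx
      simpa using sq_nonneg (lap u 0)
    · have hn : ‖x‖ ≠ 0 := by simpa using hx
      have hl : lap u x ^ 2 = (‖x‖ ^ 4)⁻¹ * (‖x‖ ^ 2 * lap u x) ^ 2 := by
        field_simp
      have hd : u x ^ 2 / (‖x‖ ^ 4 * E1 (‖x‖ / R) ^ 2)
          = (‖x‖ ^ 4)⁻¹ * (u x ^ 2 / E1 (‖x‖ / R) ^ 2) := by
        rw [← div_div, div_right_comm, div_eq_inv_mul]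
      rw [hl, hd, lap_frame hu.smooth, mul_left_comm 3, ← mul_add, ← mul_add]
      refine mul_le_mul_of_nonneg_left ?_ (by positivity)
      have hpos : 0 ≤ E1 (‖x‖ / R) * along T v x ^ 2 := by
        by_cases hx : x ∈ U
        · have := hE x hx
          positivity
        · rw [(hv.adm_along T.contDiff).zero_of_notMem hx]
          simp
      linarith [hq x, hT x, j1 x, j2 x, j3 x]

/-! ### Integration -/

/-- Weighted critical Rellich estimate with gradient remainder (Proposition 2). -/
theorem stmt8 (Ω : Set (EuclideanSpace ℝ (Fin 4))) (hopen : IsOpen Ω) (hconn : IsConnected Ω)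
    (hbdd : Bornology.IsBounded Ω) (h0 : (0 : EuclideanSpace ℝ (Fin 4)) ∈ Ω)
    (R : ℝ) (hR : ∀ x ∈ Ω, ‖x‖ ≤ R)
    (u : EuclideanSpace ℝ (Fin 4) → ℝ) (hsmooth : ContDiff ℝ (⊤ : ℕ∞) u)
    (hcpt : HasCompactSupport u) (hsupp : tsupport u ⊆ Ω \ {0}) :
    3 * ∫ x in Ω, E1 (‖x‖ / R) *
        ‖gradient (fun y => (E1 (‖y‖ / R)) ^ (-(1 / 2) : ℝ) * u y) x‖ ^ 2 / ‖x‖ ^ 2 ≤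
      (∫ x in Ω, (lap u x) ^ 2) -
        ∫ x in Ω, (u x) ^ 2 / (‖x‖ ^ 4 * (E1 (‖x‖ / R)) ^ 2) := by
  have hRpos : 0 < R := by
    obtain ⟨ε, hε, hb⟩ := Metric.isOpen_iff.mp hopen 0 h0
    have : EuclideanSpace.single (0 : Fin 4) (ε / 2) ∈ Ω := hb (by
      simp [abs_of_pos hε, hε])
    have := hR _ this
    simp [abs_of_pos hε] at this
    linarith
  have hU : IsOpen (Ω \ {0}) := hopen.sdiff isClosed_singleton
  have hU0 : (0 : ℝ⁴) ∉ Ω \ {0} := by simp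
  have hu : Adm (Ω \ {0}) u := ⟨hsmooth, hcpt, hsupp⟩
  have hE : ∀ x ∈ Ω \ {0}, 0 < E1 (‖x‖ / R) := by
    intro x hx
    have : Real.log (‖x‖ / R) ≤ 0 :=
      Real.log_nonpos (by positivity) ((div_le_one hRpos).mpr (hR x hx.1))
    unfold E1
    linarith
  obtain ⟨hi, Q, hQ, hq⟩ := pointwise hRpos hU hU0 hE hu
  have hlap : Adm (Ω \ {0}) (fun x => lap u x * lap u x) := by
    have d : ∀ i, Adm (Ω \ {0}) (along (fun _ => EuclideanSpace.single i 1)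
        (along (fun _ => EuclideanSpace.single i 1) u)) := fun i =>
      (hu.adm_along contDiff_const).adm_along contDiff_const
    have : Adm (Ω \ {0}) (lap u) := by
      have e : lap u = fun x => along (fun _ => EuclideanSpace.single 0 1)
            (along (fun _ => EuclideanSpace.single 0 1) u) x
          + along (fun _ => EuclideanSpace.single 1 1)
            (along (fun _ => EuclideanSpace.single 1 1) u) x
          + along (fun _ => EuclideanSpace.single 2 1)
            (along (fun _ => EuclideanSpace.single 2 1) u) x
          + along (fun _ => EuclideanSpace.single 3 1)
            (along (fun _ => EuclideanSpace.single 3 1) u) x := by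
        ext x
        simp only [lap, Fin.sum_univ_four]
        rfl
      rw [e]
      exact (((d 0).add (d 1)).add (d 2)).add (d 3)
    exact this.mul this
  have hlap' : Integrable (fun x => lap u x ^ 2) := by
    simpa only [pow_two] using hlap.integrable
  have hpot : Integrable (fun x => (u x) ^ 2 / (‖x‖ ^ 4 * (E1 (‖x‖ / R)) ^ 2)) := by
    have hg : ContDiffOn ℝ ∞ (fun y : ℝ⁴ => (E1 (‖y‖ / R) ^ 2)⁻¹) (Ω \ {0}) := fun x hx =>
      (((contDiffAt_E1 hRpos hx.2).pow 2).inv (pow_pos (hE x hx) 2).ne').contDiffWithinAt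
    have := (((hu.mul hu).weight hU hg).weight hU (contDiffOn_norm_weight hU0 4)).integrable
    refine this.congr (Filter.Eventually.of_forall fun x => ?_)
    simp only [div_eq_mul_inv, mul_inv]
    ring
  have off : ∀ x ∉ Ω, x ∉ Ω \ {0} := fun x hx h => hx h.1
  -- all three integrands vanish off `Ω`, so the integrals can be taken over `ℝ⁴`
  rw [setIntegral_eq_integral_of_forall_compl_eq_zero, setIntegral_eq_integral_of_forall_compl_eq_zero,
    setIntegral_eq_integral_of_forall_compl_eq_zero]
  · have h := integral_mono (((hi.const_mul 3).add hpot).add hQ.int) hlap' hq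
    rw [integral_add' ((hi.const_mul 3).add hpot) hQ.int, integral_add' (hi.const_mul 3) hpot,
      hQ.zero, integral_const_mul] at h
    linarith
  · intro x hx
    simp [hu.zero_of_notMem (off x hx)]
  · intro x hx
    have := hlap.zero_of_notMem (off x hx)
    rw [pow_two, this]
  · intro x hx
    have hv : fderiv ℝ (fun y => (E1 (‖y‖ / R)) ^ (-(1 / 2) : ℝ) * u y) x = 0 := by
      refine image_eq_zero_of_notMem_tsupport fun h => off x hx (hsupp ?_)
      exact tsupport_mul_subset_right (tsupport_fderiv_subset ℝ h)
    rw [gradient, hv]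
    simp
end

section
/- Let B be the open unit ball in ℝ⁴ centered at the origin. Then for every radial function w ∈ C₀^∞(B \ {0}) one has ∫_B (Δw)² dx ≥ 4 · ∫_B |∇w(x)|² / |x|² dx. -/
/-!
Write `w x = u ‖x‖`, where `u` is the restriction of `w` to a line through the origin, a smooth
compactly supported function on `ℝ`. Away from the origin `‖∇w‖ = |u'(r)|` and
`Δw = u''(r) + 3 u'(r) / r` with `r = ‖x‖`, so in polar coordinates the claim becomes
`4 ∫ u'² r dr ≤ ∫ (u'' + 3 u' / r)² r³ dr` over `(0, ∞)`. This follows by integrating the identity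
`(u'' + 3 u' / r)² r³ - 4 u'² r = r (r u'' + u')² + 2 (r² u'²)'`,
since the total derivative of the compactly supported `r² u'²`, which vanishes at `0`,
integrates to `0`.
-/


open MeasureTheory Real

/-- The one-dimensional inequality behind the theorem; `v` plays the role of the radial
derivative. -/
lemma radial_ineq (v : ℝ → ℝ) (hv : ContDiff ℝ 1 v) (hc : HasCompactSupport v) :
    4 * ∫ r in Set.Ioi (0 : ℝ), r ^ 3 * (v r ^ 2 / r ^ 2) ≤
      ∫ r in Set.Ioi (0 : ℝ), r ^ 3 * (deriv v r + 3 / r * v r) ^ 2 := by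
  have hv' : Continuous (deriv v) := hv.continuous_deriv le_rfl
  have hc' : HasCompactSupport (deriv v) := hc.deriv
  have hvc := hv.continuous
  have e1 : ∀ r : ℝ, r ^ 3 * (v r ^ 2 / r ^ 2) = v r * (r * v r) := by
    intro r
    rcases eq_or_ne r 0 with rfl | h
    · simp
    · field_simp
  have e2 : ∀ r : ℝ, r ^ 3 * (deriv v r + 3 / r * v r) ^ 2 =
      deriv v r * (r ^ 3 * deriv v r + 6 * r ^ 2 * v r) + v r * (9 * r * v r) := by
    intro r
    rcases eq_or_ne r 0 with rfl | h
    · simp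
    · field_simp
      ring
  have hF : ContDiff ℝ 1 (fun r => v r * (r ^ 2 * v r)) := by fun_prop
  have hFc : HasCompactSupport (fun r => v r * (r ^ 2 * v r)) := hc.mul_right
  have hd : ∀ r, deriv (fun r => v r * (r ^ 2 * v r)) r =
      2 * r * v r ^ 2 + 2 * r ^ 2 * v r * deriv v r := by
    intro r
    have h := ((hv.differentiable (by norm_num)) r).hasDerivAt
    have := (h.mul ((hasDerivAt_pow 2 r).mul h)).deriv
    refine this.trans ?_
    simp
    ring
  have h0 : ∫ r in Set.Ioi (0 : ℝ), deriv (fun r => v r * (r ^ 2 * v r)) r = 0 := by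
    rw [HasCompactSupport.integral_Ioi_deriv_eq hF hFc]
    simp
  have i0 : Integrable (deriv (fun r => v r * (r ^ 2 * v r))) :=
    (hF.continuous_deriv le_rfl).integrable_of_hasCompactSupport hFc.deriv
  have i1 : Integrable (fun r => v r * (r * v r)) :=
    Continuous.integrable_of_hasCompactSupport (by fun_prop) hc.mul_right
  have i2 : Integrable (fun r => deriv v r * (r ^ 3 * deriv v r + 6 * r ^ 2 * v r)
      + v r * (9 * r * v r)) :=
    Continuous.integrable_of_hasCompactSupport (by fun_prop) (hc'.mul_right.add hc.mul_right)
  simp_rw [e1, e2]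
  calc 4 * ∫ r in Set.Ioi (0 : ℝ), v r * (r * v r)
      = ∫ r in Set.Ioi (0 : ℝ),
          (4 * (v r * (r * v r)) + 2 * deriv (fun r => v r * (r ^ 2 * v r)) r) := by
        rw [integral_add (i1.integrableOn.const_mul 4) (i0.integrableOn.const_mul 2),
          integral_const_mul, integral_const_mul, h0]
        simp
    _ ≤ _ := by
        refine setIntegral_mono_on ((i1.const_mul 4).add (i0.const_mul 2)).integrableOn
          i2.integrableOn measurableSet_Ioi fun r hr => ?_
        rw [hd]
        have := mul_nonneg (le_of_lt hr) (sq_nonneg (r * deriv v r + v r))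
        nlinarith

lemma hasFDerivAt_norm_of_ne {n : ℕ} {x : EuclideanSpace ℝ (Fin n)} (hx : x ≠ 0) :
    HasFDerivAt (fun y : EuclideanSpace ℝ (Fin n) => ‖y‖) (‖x‖⁻¹ • innerSL ℝ x) x := by
  have h := ((hasStrictFDerivAt_norm_sq x).hasFDerivAt).sqrt (by simpa using hx)
  simp only [Real.sqrt_sq (norm_nonneg _)] at h
  have : ‖x‖ ≠ 0 := by simpa using hx
  refine h.congr_fderiv ?_
  ext y
  simp
  field_simp

lemma hasFDerivAt_radial {n : ℕ} {u : ℝ → ℝ} (hu : Differentiable ℝ u)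
    {x : EuclideanSpace ℝ (Fin n)} (hx : x ≠ 0) :
    HasFDerivAt (fun y : EuclideanSpace ℝ (Fin n) => u ‖y‖)
      (deriv u ‖x‖ • ‖x‖⁻¹ • innerSL ℝ x) x :=
  (hu ‖x‖).hasDerivAt.comp_hasFDerivAt x (hasFDerivAt_norm_of_ne hx)

lemma norm_gradient_radial {n : ℕ} {u : ℝ → ℝ} (hu : Differentiable ℝ u)
    {x : EuclideanSpace ℝ (Fin n)} (hx : x ≠ 0) :
    ‖gradient (fun y : EuclideanSpace ℝ (Fin n) => u ‖y‖) x‖ = |deriv u ‖x‖| := by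
  have : ‖x‖ ≠ 0 := by simpa using hx
  rw [gradient, LinearIsometryEquiv.norm_map, (hasFDerivAt_radial hu hx).fderiv]
  simp [norm_smul, this]

lemma lap_radial {n : ℕ} {u : ℝ → ℝ} (hu : Differentiable ℝ u)
    (hu' : Differentiable ℝ (deriv u)) {x : EuclideanSpace ℝ (Fin n)} (hx : x ≠ 0) :
    lap (fun y : EuclideanSpace ℝ (Fin n) => u ‖y‖) x =
      deriv (deriv u) ‖x‖ + (n - 1) / ‖x‖ * deriv u ‖x‖ := by
  have hn : ‖x‖ ≠ 0 := by simpa using hx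
  have key : ∀ i : Fin n, fderiv ℝ (fun y => fderiv ℝ
      (fun y : EuclideanSpace ℝ (Fin n) => u ‖y‖) y (EuclideanSpace.single i 1)) x
        (EuclideanSpace.single i 1) =
      deriv (deriv u) ‖x‖ * (x i ^ 2 / ‖x‖ ^ 2) +
        deriv u ‖x‖ * (1 / ‖x‖ - x i ^ 2 / ‖x‖ ^ 3) := by
    intro i
    have hev : (fun y => fderiv ℝ (fun y : EuclideanSpace ℝ (Fin n) => u ‖y‖) y
        (EuclideanSpace.single i 1)) =ᶠ[nhds x] fun y => deriv u ‖y‖ * (‖y‖⁻¹ * y i) := by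
      filter_upwards [isOpen_ne.mem_nhds hx] with y hy
      rw [(hasFDerivAt_radial hu hy).fderiv]
      simp [EuclideanSpace.inner_single_right]
    rw [hev.fderiv_eq]
    have hinv := (hasDerivAt_inv hn).comp_hasFDerivAt x (hasFDerivAt_norm_of_ne hx)
    have hi : HasFDerivAt (fun y : EuclideanSpace ℝ (Fin n) => y i)
        (EuclideanSpace.proj i : EuclideanSpace ℝ (Fin n) →L[ℝ] ℝ) x :=
      (EuclideanSpace.proj i : EuclideanSpace ℝ (Fin n) →L[ℝ] ℝ).hasFDerivAt
    have h := (hasFDerivAt_radial hu' hx).mul (hinv.mul hi)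
    have h2 := congrArg (fun L => L (EuclideanSpace.single i 1)) h.fderiv
    refine Eq.trans h2 ?_
    simp [EuclideanSpace.inner_single_right]
    field_simp
    ring
  have hs : ∑ i, x i ^ 2 = ‖x‖ ^ 2 := by
    rw [EuclideanSpace.norm_sq_eq]
    simp
  rw [lap, Finset.sum_congr rfl fun i _ => key i, Finset.sum_add_distrib, ← Finset.mul_sum,
    ← Finset.mul_sum, Finset.sum_sub_distrib]
  simp only [← Finset.sum_div, hs]
  simp
  field_simp

/-- Rellich-type inequality with gradient term for radial functions on the unit ball of `ℝ⁴`. -/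
theorem stmt9 (w : EuclideanSpace ℝ (Fin 4) → ℝ) (hsmooth : ContDiff ℝ (⊤ : ℕ∞) w)
    (hcpt : HasCompactSupport w)
    (hsupp : tsupport w ⊆ Metric.ball 0 1 \ {0}) (hrad : ∃ g : ℝ → ℝ, ∀ x, w x = g ‖x‖) :
    4 * ∫ x in Metric.ball (0 : EuclideanSpace ℝ (Fin 4)) 1, ‖gradient w x‖ ^ 2 / ‖x‖ ^ 2 ≤
      ∫ x in Metric.ball (0 : EuclideanSpace ℝ (Fin 4)) 1, (lap w x) ^ 2 := by
  obtain ⟨g, hg⟩ := hrad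
  -- The radial profile, extended to an even function on the whole line.
  set u : ℝ → ℝ := fun r => w (r • EuclideanSpace.single 0 1) with hudef
  have hw : w = fun x => u ‖x‖ := by
    funext x
    simp [hudef, hg, norm_smul]
  have hu : ContDiff ℝ (⊤ : ℕ∞) u := by
    have : ContDiff ℝ (⊤ : ℕ∞)
      (fun r : ℝ => r • (EuclideanSpace.single 0 1 : EuclideanSpace ℝ (Fin 4))) := by fun_prop
    exact hsmooth.comp this
  have huc : HasCompactSupport u := by
    have hiso : Isometry
        (fun r : ℝ => r • (EuclideanSpace.single 0 1 : EuclideanSpace ℝ (Fin 4))) :=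
      Isometry.of_dist_eq fun a b => by
        rw [dist_eq_norm, dist_eq_norm, ← sub_smul, norm_smul]
        simp
    exact hcpt.comp_isClosedEmbedding hiso.isClosedEmbedding
  have hu1 : Differentiable ℝ u := hu.differentiable (by simp)
  have hu2 : ContDiff ℝ 1 (deriv u) := by
    have : ContDiff ℝ (1 + 1) u := by
      rw [one_add_one_eq_two]
      exact contDiff_infty.1 hu 2
    exact (contDiff_succ_iff_deriv.1 this).2.2
  have hu3 : Differentiable ℝ (deriv u) := hu2.differentiable (by norm_num)
  have hnot : ∀ x, x ∉ Metric.ball (0 : EuclideanSpace ℝ (Fin 4)) 1 → x ∉ tsupport w :=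
    fun x hx h => hx (hsupp h).1
  have hfd : ∀ x, x ∉ tsupport w → fderiv ℝ w x = 0 := fun x hx =>
    image_eq_zero_of_notMem_tsupport fun h => hx (tsupport_fderiv_subset ℝ h)
  have hlap0 : ∀ x, x ∉ tsupport w → lap w x = 0 := by
    intro x hx
    refine Finset.sum_eq_zero fun i _ => ?_
    have hev : (fun y => fderiv ℝ w y (EuclideanSpace.single i 1)) =ᶠ[nhds x] fun _ => 0 := by
      filter_upwards [(isClosed_tsupport w).isOpen_compl.mem_nhds hx] with y hy
      rw [hfd y hy]
      rfl
    rw [hev.fderiv_eq]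
    simp
  rw [setIntegral_eq_integral_of_forall_compl_eq_zero
      (fun x hx => by simp [gradient, hfd x (hnot x hx)]),
    setIntegral_eq_integral_of_forall_compl_eq_zero
      (fun x hx => by simp [hlap0 x (hnot x hx)])]
  have hae : ∀ᵐ x : EuclideanSpace ℝ (Fin 4), x ≠ 0 := Measure.ae_ne volume 0
  have hA : ∫ x : EuclideanSpace ℝ (Fin 4), ‖gradient w x‖ ^ 2 / ‖x‖ ^ 2 =
      ∫ x : EuclideanSpace ℝ (Fin 4), (fun r => deriv u r ^ 2 / r ^ 2) ‖x‖ := by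
    refine integral_congr_ae ?_
    filter_upwards [hae] with x hx
    rw [hw, norm_gradient_radial hu1 hx, sq_abs]
  have hB : ∫ x : EuclideanSpace ℝ (Fin 4), (lap w x) ^ 2 =
      ∫ x : EuclideanSpace ℝ (Fin 4), (fun r => (deriv (deriv u) r + 3 / r * deriv u r) ^ 2) ‖x‖ := by
    refine integral_congr_ae ?_
    filter_upwards [hae] with x hx
    rw [hw, lap_radial hu1 hu3 hx]
    norm_num
  rw [hA, hB, integral_fun_norm_addHaar volume (fun r => deriv u r ^ 2 / r ^ 2),
    integral_fun_norm_addHaar volume (fun r => (deriv (deriv u) r + 3 / r * deriv u r) ^ 2)]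
  have key := radial_ineq (deriv u) hu2 huc.deriv
  simp only [finrank_euclideanSpace, Fintype.card_fin, smul_eq_mul, nsmul_eq_mul,
    Nat.add_one_sub_one]
  have hm : 0 ≤ volume.real (Metric.ball (0 : EuclideanSpace ℝ (Fin 4)) 1) := measureReal_nonneg
  have := mul_le_mul_of_nonneg_left key (mul_nonneg (by norm_num : (0 : ℝ) ≤ (4 : ℕ)) hm)
  linarith
end

section
/- Let Ω be a bounded domain in ℝ⁴ containing the origin and let R ≥ R_Ω. Then for every function u ∈ C₀^∞(Ω \ {0}) one has ∫_Ω (Δu)² dx − ∫_Ω u(x)² / ( |x|⁴ · E₁(|x|/R)² ) dx ≥ ∫_Ω u(x)² / ( |x|⁴ · E₁(|x|/R)² · E₂(|x|/R)² ) dx. -/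
/-!
The inequality is the integral of a pointwise identity: the difference of the two sides is
a divergence plus a sum of two squares. Write `Du = x · ∇u`, `r = |x|`, `a = E₁(r/R)`, `b = E₂(r/R)`.

* Expanding `(Δu - 2 Du/r²)² ≥ 0` gives `(Δu)² ≥ 4 Δu Du/r² - 4 (Du)²/r⁴`, and in dimension four
  the Pohozaev-type identity
  `Δu · Du/r² = div (∇u Du/r² - x |∇u|²/(2r²)) + 2 (Du)²/r⁴` holds. Hence, up to a divergence,
  `(Δu)² ≥ 4 (Du)²/r⁴`.
* What remains is a one-dimensional Hardy inequality in the variable `t = ln r` with ground state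
  `φ = √(a b)`: with `g = (ln φ)_t = -(1/a + 1/(ab))/2` one expands `(Du - g u)² ≥ 0` and uses that
  `x/r⁴` is divergence free in dimension four and that
  `-4 (g_t + g²) = 1/a² + 1/(a²b²)`.

So the vector field `V = 4 (∇u Du/r² - x |∇u|²/(2r²) + g u² x/r⁴)` satisfies
`(Δu)² - u²/(r⁴a²) - u²/(r⁴a²b²) - div V = (Δu - 2 Du/r²)² + 4 (Du - g u)²/r⁴`
(`fieldDeriv_identity`). Since `u` is supported away from the origin and inside the ball where
`a, b ≥ 1`, the field `V` is `C¹` with compact support and `∫ div V = 0`.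
-/

open MeasureTheory Real

/-- Four-dimensional Euclidean space. -/
abbrev E4 := EuclideanSpace ℝ (Fin 4)

/-- The `i`-th standard basis vector. -/
noncomputable abbrev bv (i : Fin 4) : E4 := EuclideanSpace.single i 1

/-- The partial derivative `∂ᵢ u`. -/
noncomputable def pd (u : E4 → ℝ) (i : Fin 4) (x : E4) : ℝ := fderiv ℝ u x (bv i)

/-- `|x|²`, written in coordinates. -/
noncomputable def rho (x : E4) : ℝ := ∑ j, x j ^ 2

/-- `E₁(|x|/R)` expressed through `|x|²`; valid for `x ≠ 0` and `R > 0`, see `E1_eq`. -/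
noncomputable def la (R : ℝ) (x : E4) : ℝ := 1 + log R - log (rho x) / 2

/-- Logarithmic derivative with respect to `ln |x|` of the ground state `√(E₁ E₂)`. -/
noncomputable def gg (R : ℝ) (x : E4) : ℝ :=
  -((la R x)⁻¹ + (la R x)⁻¹ * (1 + log (la R x))⁻¹) / 2

/-- The `i`-th component of the vector field whose divergence is subtracted from `(Δu)²`. -/
noncomputable def fld (R : ℝ) (u : E4 → ℝ) (i : Fin 4) (x : E4) : ℝ :=
  4 * (pd u i x * (∑ j, x j * pd u j x) * (rho x)⁻¹
    - x i * (∑ j, pd u j x ^ 2) * (rho x)⁻¹ / 2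
    + gg R x * x i * u x ^ 2 * (rho x)⁻¹ ^ 2)

/-- The value of `∂ᵢ Vᵢ` produced by the product rule, as a function of the values of `x`, `u`,
`∇u = p`, `D²u = q`, `k = |x|⁻²`, `g` and `gt = dg / d(ln |x|)`. -/
noncomputable def fieldDeriv (x p : Fin 4 → ℝ) (q : Fin 4 → Fin 4 → ℝ) (k g gt u : ℝ) (i : Fin 4) : ℝ :=
  4 * (q i i * (∑ j, x j * p j) * k + p i * (p i + ∑ j, x j * q j i) * k
      + p i * (∑ j, x j * p j) * (-(2 * x i) * k ^ 2)
    - ((∑ j, p j ^ 2) * k + x i * (∑ j, 2 * p j * q j i) * k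
        + x i * (∑ j, p j ^ 2) * (-(2 * x i) * k ^ 2)) / 2
    + (gt * k * x i * x i * u ^ 2 * k ^ 2 + g * u ^ 2 * k ^ 2 + g * x i * (2 * u * p i) * k ^ 2
        + g * x i * u ^ 2 * (2 * k * (-(2 * x i) * k ^ 2))))

/-- The divergence in closed form. The two terms in `|∇u|²` cancel because
`div (x/|x|²) = 2/|x|²` in dimension four, and the undifferentiated `g u²` terms cancel because
`x/|x|⁴` is divergence free. -/
theorem sum_fieldDeriv (x p : Fin 4 → ℝ) (q : Fin 4 → Fin 4 → ℝ) (k g gt u : ℝ)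
    (hq : ∀ i j, q i j = q j i) (hk : (∑ j, x j ^ 2) * k = 1) :
    ∑ i, fieldDeriv x p q k g gt u i =
      4 * ((∑ i, q i i) * (∑ j, x j * p j) * k - 2 * (∑ j, x j * p j) ^ 2 * k ^ 2
        + gt * u ^ 2 * k ^ 2 + 2 * g * u * (∑ j, x j * p j) * k ^ 2) := by
  simp only [fieldDeriv, Fin.sum_univ_four] at *
  rw [hq 1 0, hq 2 0, hq 3 0, hq 2 1, hq 3 1, hq 3 2]
  linear_combination (4 * (p 0 ^ 2 + p 1 ^ 2 + p 2 ^ 2 + p 3 ^ 2) * k + 4 * gt * u ^ 2 * k ^ 2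
    - 16 * g * u ^ 2 * k ^ 2) * hk

/-- The sum-of-squares identity behind the inequality, with `a = E₁`, `b = E₂`, `k = |x|⁻²`. -/
theorem fieldDeriv_identity (x p : Fin 4 → ℝ) (q : Fin 4 → Fin 4 → ℝ) (k a b u : ℝ)
    (hq : ∀ i j, q i j = q j i) (hk : (∑ j, x j ^ 2) * k = 1) :
    (∑ i, q i i) ^ 2 - u ^ 2 * k ^ 2 * a⁻¹ ^ 2 - u ^ 2 * k ^ 2 * a⁻¹ ^ 2 * b⁻¹ ^ 2
      - ∑ i, fieldDeriv x p q k (-(a⁻¹ + a⁻¹ * b⁻¹) / 2)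
          (-(a⁻¹ ^ 2 + a⁻¹ ^ 2 * b⁻¹ + a⁻¹ ^ 2 * b⁻¹ ^ 2) / 2) u i
    = (∑ i, q i i - 2 * (∑ j, x j * p j) * k) ^ 2
      + 4 * k ^ 2 * (∑ j, x j * p j - -(a⁻¹ + a⁻¹ * b⁻¹) / 2 * u) ^ 2 := by
  rw [sum_fieldDeriv x p q k _ _ u hq hk]
  ring

theorem rho_eq (x : E4) : rho x = ‖x‖ ^ 2 := by
  rw [EuclideanSpace.real_norm_sq_eq]; rfl

theorem rho_pos {x : E4} (hx : x ≠ 0) : 0 < rho x := by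
  rw [rho_eq]; have := norm_pos_iff.2 hx; positivity

theorem E1_eq {R : ℝ} (hR : 0 < R) {x : E4} (hx : x ≠ 0) : E1 (‖x‖ / R) = la R x := by
  have := norm_pos_iff.2 hx
  rw [E1, la, rho_eq, log_div this.ne' hR.ne', log_pow]
  push_cast; ring

theorem one_le_la {R : ℝ} (hR : 0 < R) {x : E4} (hx : x ≠ 0) (h : ‖x‖ ≤ R) : 1 ≤ la R x := by
  have h0 := norm_pos_iff.2 hx
  have := log_le_log h0 h
  rw [← E1_eq hR hx, E1, log_div h0.ne' hR.ne']
  linarith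

theorem one_le_lb {R : ℝ} (hR : 0 < R) {x : E4} (hx : x ≠ 0) (h : ‖x‖ ≤ R) :
    1 ≤ 1 + log (la R x) := by
  have := log_nonneg (one_le_la hR hx h)
  linarith

theorem contDiff_pd {u : E4 → ℝ} (hu : ContDiff ℝ (⊤ : ℕ∞) u) (i : Fin 4) :
    ContDiff ℝ (⊤ : ℕ∞) (pd u i) := by
  unfold pd
  exact (hu.fderiv_right (m := (⊤ : ℕ∞)) (by simp)).clm_apply contDiff_const

theorem pd_symm {u : E4 → ℝ} (hu : ContDiff ℝ (⊤ : ℕ∞) u) (i j : Fin 4) (x : E4) :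
    fderiv ℝ (pd u i) x (bv j) = fderiv ℝ (pd u j) x (bv i) := by
  have hd : DifferentiableAt ℝ (fderiv ℝ u) x :=
    ((hu.fderiv_right (m := (⊤ : ℕ∞)) (by simp)).differentiable (by simp)) x
  have key : ∀ i j, fderiv ℝ (pd u i) x (bv j) = fderiv ℝ (fderiv ℝ u) x (bv j) (bv i) := by
    intro i j
    have : pd u i = fun y => fderiv ℝ u y (bv i) := rfl
    rw [this, fderiv_clm_apply hd (differentiableAt_const _)]
    simp
  rw [key, key]
  have hs : IsSymmSndFDerivAt ℝ u x := hu.contDiffAt.isSymmSndFDerivAt (by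
    rw [minSmoothness_of_isRCLikeNormedField]
    exact WithTop.coe_le_coe.2 (le_top : (2 : ℕ∞) ≤ ⊤))
  exact hs _ _

theorem contDiff_rho : ContDiff ℝ 1 rho := by
  unfold rho
  fun_prop

theorem contDiffAt_la (R : ℝ) {x : E4} (hx : x ≠ 0) : ContDiffAt ℝ 1 (la R) x := by
  unfold la
  exact contDiffAt_const.sub ((contDiff_rho.contDiffAt.log (rho_pos hx).ne').div_const _)

theorem contDiffAt_lb {R : ℝ} (hR : 0 < R) {x : E4} (hx : x ≠ 0) (h : ‖x‖ ≤ R) :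
    ContDiffAt ℝ 1 (fun x => 1 + log (la R x)) x :=
  contDiffAt_const.add
    ((contDiffAt_la R hx).log (by linarith [one_le_la hR hx h]))

theorem contDiffAt_fld {R : ℝ} (hR : 0 < R) {u : E4 → ℝ} (hu : ContDiff ℝ (⊤ : ℕ∞) u)
    (i : Fin 4) {x : E4} (hx : x ≠ 0) (h : ‖x‖ ≤ R) : ContDiffAt ℝ 1 (fld R u i) x := by
  have h1 : ContDiffAt ℝ 1 (fun x => (rho x)⁻¹) x :=
    contDiff_rho.contDiffAt.inv (rho_pos hx).ne'
  have h2 : ContDiffAt ℝ 1 (fun x => (la R x)⁻¹) x :=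
    (contDiffAt_la R hx).inv (by linarith [one_le_la hR hx h])
  have h3 : ContDiffAt ℝ 1 (fun x => (1 + log (la R x))⁻¹) x :=
    (contDiffAt_lb hR hx h).inv (by linarith [one_le_lb hR hx h])
  have h4 : ∀ j, ContDiffAt ℝ 1 (pd u j) x := fun j =>
    ((contDiff_pd hu j).of_le (by exact_mod_cast le_top)).contDiffAt
  have h5 : ContDiffAt ℝ 1 u x := (hu.of_le (by exact_mod_cast le_top)).contDiffAt
  unfold fld gg
  fun_prop

theorem fderiv_fld {R : ℝ} (hR : 0 < R) {u : E4 → ℝ} (hu : ContDiff ℝ (⊤ : ℕ∞) u)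
    (i : Fin 4) {x : E4} (hx : x ≠ 0) (h : ‖x‖ ≤ R) :
    fderiv ℝ (fld R u i) x (bv i) =
      fieldDeriv (fun j => x j) (fun j => pd u j x) (fun j l => fderiv ℝ (pd u j) x (bv l))
        (rho x)⁻¹ (-((la R x)⁻¹ + (la R x)⁻¹ * (1 + log (la R x))⁻¹) / 2)
        (-((la R x)⁻¹ ^ 2 + (la R x)⁻¹ ^ 2 * (1 + log (la R x))⁻¹
          + (la R x)⁻¹ ^ 2 * (1 + log (la R x))⁻¹ ^ 2) / 2) (u x) i := by
  have hρ := (rho_pos hx).ne'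
  have ha : la R x ≠ 0 := by linarith [one_le_la hR hx h]
  have hb : 1 + log (la R x) ≠ 0 := by linarith [one_le_lb hR hx h]
  -- Everything is differentiated along the line `t ↦ x + t eᵢ` at `t = 0`.
  have line : ∀ f : E4 → ℝ, DifferentiableAt ℝ f x →
      HasDerivAt (fun t : ℝ => f (x + t • bv i)) (fderiv ℝ f x (bv i)) 0 :=
    fun f hf => hf.hasFDerivAt.hasLineDerivAt (bv i)
  have z : x + (0 : ℝ) • bv i = x := by simp
  have hX : ∀ j, HasDerivAt (fun t : ℝ => (x + t • bv i) j) (if j = i then 1 else 0) 0 := by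
    intro j
    have : HasDerivAt (fun t : ℝ => x j + t * (if j = i then 1 else 0))
        (if j = i then 1 else 0) 0 := by
      simpa using ((hasDerivAt_id (0 : ℝ)).mul_const (if j = i then (1 : ℝ) else 0)).const_add (x j)
    convert this using 2
    simp [bv]
  have hP : ∀ j, HasDerivAt (fun t : ℝ => pd u j (x + t • bv i))
      (fderiv ℝ (pd u j) x (bv i)) 0 := fun j =>
    line _ ((contDiff_pd hu j).differentiable (by simp) x)
  have hU : HasDerivAt (fun t : ℝ => u (x + t • bv i)) (pd u i x) 0 :=
    line _ (hu.differentiable (by simp) x)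
  have hrho : HasDerivAt (fun t : ℝ => rho (x + t • bv i)) (2 * x i) 0 := by
    have := HasDerivAt.fun_sum (u := Finset.univ) (fun j _ => (hX j).pow 2)
    unfold rho
    refine this.congr_deriv ?_
    simp
  have hS : HasDerivAt (fun t : ℝ => ∑ j, (x + t • bv i) j * pd u j (x + t • bv i))
      (pd u i x + ∑ j, x j * fderiv ℝ (pd u j) x (bv i)) 0 := by
    have := HasDerivAt.fun_sum (u := Finset.univ) (fun j _ => (hX j).mul (hP j))
    refine this.congr_deriv ?_
    rw [z, Finset.sum_add_distrib]
    simp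
  have hQ : HasDerivAt (fun t : ℝ => ∑ j, pd u j (x + t • bv i) ^ 2)
      (∑ j, 2 * pd u j x * fderiv ℝ (pd u j) x (bv i)) 0 := by
    have := HasDerivAt.fun_sum (u := Finset.univ) (fun j _ => (hP j).pow 2)
    refine this.congr_deriv ?_
    simp
  have hk : HasDerivAt (fun t : ℝ => (rho (x + t • bv i))⁻¹)
      (-(2 * x i) * (rho x)⁻¹ ^ 2) 0 := by
    refine (hrho.fun_inv (by rwa [z])).congr_deriv ?_
    rw [z]; field_simp
  have hla : HasDerivAt (fun t : ℝ => la R (x + t • bv i)) (-(x i * (rho x)⁻¹)) 0 := by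
    unfold la
    refine (((hrho.log (by rwa [z])).div_const 2).const_sub _).congr_deriv ?_
    rw [z]; field_simp
  have hai := hla.fun_inv (by rwa [z])
  have hbi := ((hla.log (by rwa [z])).const_add 1).fun_inv (by rwa [z])
  have hg : HasDerivAt (fun t : ℝ => gg R (x + t • bv i))
      (-((la R x)⁻¹ ^ 2 + (la R x)⁻¹ ^ 2 * (1 + log (la R x))⁻¹
          + (la R x)⁻¹ ^ 2 * (1 + log (la R x))⁻¹ ^ 2) / 2 * (rho x)⁻¹ * x i) 0 := by
    unfold gg
    refine ((hai.add (hai.mul hbi)).fun_neg.div_const 2).congr_deriv ?_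
    rw [z]; field_simp; ring
  have hXi : HasDerivAt (fun t : ℝ => (x + t • bv i) i) 1 0 := by simpa using hX i
  have hmain := ((((hP i).mul hS).mul hk).sub (((hXi.mul hQ).mul hk).div_const 2)).add
    (((hg.mul hXi).mul (hU.pow 2)).mul (hk.pow 2)) |>.const_mul 4
  have hF := line _ ((contDiffAt_fld hR hu i hx h).differentiableAt (by simp))
  refine hF.unique (hmain.congr_deriv ?_)
  simp only [z, Pi.mul_apply, Pi.pow_apply, fieldDeriv]
  rw [show gg R x = -((la R x)⁻¹ + (la R x)⁻¹ * (1 + log (la R x))⁻¹) / 2 from rfl]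
  push_cast
  ring

/-- A function that is `C¹` at the points of the closed set `K` and vanishes off `K` is `C¹`. -/
theorem contDiff_of_vanish {f : E4 → ℝ} {K : Set E4} (hK : IsClosed K)
    (h1 : ∀ x ∈ K, ContDiffAt ℝ 1 f x) (h2 : ∀ x ∉ K, f x = 0) : ContDiff ℝ 1 f := by
  refine contDiff_iff_contDiffAt.2 fun x => ?_
  by_cases hx : x ∈ K
  · exact h1 x hx
  · refine (contDiffAt_const (c := (0 : ℝ))).congr_of_eventuallyEq ?_
    filter_upwards [hK.isOpen_compl.mem_nhds hx] with y hy using h2 y hy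

/-- Directional derivatives of compactly supported `C¹` functions integrate to zero. -/
theorem integral_fderiv_zero {f : E4 → ℝ} (hf : ContDiff ℝ 1 f) (hc : HasCompactSupport f)
    (v : E4) : Integrable (fun x => fderiv ℝ f x v) ∧ ∫ x, fderiv ℝ f x v = 0 := by
  have hi : Integrable (fun x => fderiv ℝ f x v) :=
    ((hf.continuous_fderiv (by simp)).clm_apply continuous_const).integrable_of_hasCompactSupport
      (hc.fderiv_apply ℝ v)
  refine ⟨hi, ?_⟩
  have := integral_mul_fderiv_eq_neg_fderiv_mul_of_integrable (𝕜 := ℝ) (μ := (volume : Measure E4))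
    (f := fun _ : E4 => (1 : ℝ)) (g := f) (v := v) (by simp)
    (by simpa using hi) (by simpa using hf.continuous.integrable_of_hasCompactSupport hc)
    (fun x _ => differentiableAt_const _) (fun x _ => hf.differentiable (by simp) x)
  simpa using this

/-- Critical Rellich inequality in dimension four with remainder term (Proposition 3). -/
theorem stmt12 (Ω : Set (EuclideanSpace ℝ (Fin 4))) (hopen : IsOpen Ω) (hconn : IsConnected Ω)
    (hbdd : Bornology.IsBounded Ω) (h0 : (0 : EuclideanSpace ℝ (Fin 4)) ∈ Ω)
    (R : ℝ) (hR : ∀ x ∈ Ω, ‖x‖ ≤ R)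
    (u : EuclideanSpace ℝ (Fin 4) → ℝ) (hsmooth : ContDiff ℝ (⊤ : ℕ∞) u)
    (hcpt : HasCompactSupport u) (hsupp : tsupport u ⊆ Ω \ {0}) :
    (∫ x in Ω, (u x) ^ 2 / (‖x‖ ^ 4 * (E1 (‖x‖ / R)) ^ 2 * (E2 (‖x‖ / R)) ^ 2)) ≤
      (∫ x in Ω, (lap u x) ^ 2) -
        ∫ x in Ω, (u x) ^ 2 / (‖x‖ ^ 4 * (E1 (‖x‖ / R)) ^ 2) := by
  have hne : ∀ x ∈ tsupport u, x ≠ 0 := fun x hx => (hsupp hx).2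
  have hle : ∀ x ∈ tsupport u, ‖x‖ ≤ R := fun x hx => hR x (hsupp hx).1
  have hu0 : ∀ x ∉ tsupport u, u x = 0 := fun x hx => image_eq_zero_of_notMem_tsupport hx
  -- An open set containing the origin is not `{0}`, so `R` is positive.
  have hRpos : 0 < R := by
    obtain ⟨ε, hε, hball⟩ := Metric.isOpen_iff.1 hopen 0 h0
    have hmem : EuclideanSpace.single (0 : Fin 4) (ε / 2) ∈ Ω := by
      apply hball
      simp [abs_of_pos hε]
      linarith
    have := hR _ hmem
    simp [abs_of_pos hε] at this
    linarith
  have hpd0 : ∀ i, ∀ x ∉ tsupport u, pd u i x = 0 := fun i x hx => by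
    simp [pd, fderiv_of_notMem_tsupport ℝ hx]
  have hfld0 : ∀ i, ∀ x ∉ tsupport u, fld R u i x = 0 := fun i x hx => by
    simp [fld, hpd0 _ x hx, hu0 x hx]
  have hKc : IsClosed (tsupport u) := isClosed_tsupport u
  have hcs : ∀ f : E4 → ℝ, (∀ x ∉ tsupport u, f x = 0) → HasCompactSupport f :=
    fun f hf => HasCompactSupport.intro hcpt (fun x hx => hf x hx)
  have hfldi := fun i => integral_fderiv_zero
    (contDiff_of_vanish hKc (fun x hx => contDiffAt_fld hRpos hsmooth i (hne x hx) (hle x hx))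
      (hfld0 i)) (hcs _ (hfld0 i)) (bv i)
  have hlap : ∀ x, lap u x = ∑ i, fderiv ℝ (pd u i) x (bv i) := fun x => rfl
  have hlap0 : ∀ x ∉ tsupport u, lap u x = 0 := fun x hx => by
    rw [hlap]
    refine Finset.sum_eq_zero fun i _ => ?_
    have : pd u i =ᶠ[nhds x] fun _ => 0 := by
      filter_upwards [hKc.isOpen_compl.mem_nhds hx] with y hy using hpd0 i y hy
    rw [this.fderiv_eq]; simp
  have hlapc : Continuous (lap u) := by
    have : lap u = fun x => ∑ i, fderiv ℝ (pd u i) x (bv i) := rfl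
    rw [this]
    exact continuous_finsetSum _ fun i _ =>
      ((contDiff_pd hsmooth i).continuous_fderiv (by simp)).clm_apply continuous_const
  -- On the support of `u` the weights take the form used in `fieldDeriv_identity`.
  have hB : ∀ x, u x ^ 2 / (‖x‖ ^ 4 * E1 (‖x‖ / R) ^ 2) =
      u x ^ 2 * (rho x)⁻¹ ^ 2 * (la R x)⁻¹ ^ 2 := fun x => by
    by_cases hx : x ∈ tsupport u
    · rw [E1_eq hRpos (hne x hx), rho_eq, div_eq_mul_inv, mul_inv, inv_pow, inv_pow]
      ring_nf
    · simp [hu0 x hx]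
  have hC : ∀ x, u x ^ 2 / (‖x‖ ^ 4 * E1 (‖x‖ / R) ^ 2 * E2 (‖x‖ / R) ^ 2) =
      u x ^ 2 * (rho x)⁻¹ ^ 2 * (la R x)⁻¹ ^ 2 * (1 + log (la R x))⁻¹ ^ 2 := fun x => by
    by_cases hx : x ∈ tsupport u
    · rw [E2, E1_eq hRpos (hne x hx), rho_eq, div_eq_mul_inv, mul_inv, mul_inv]
      simp only [← inv_pow]
      ring
    · simp [hu0 x hx]
  have hsU : ∀ x, ContDiffAt ℝ 1 u x := fun x =>
    (hsmooth.of_le (by exact_mod_cast le_top)).contDiffAt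
  have h1 : ∀ x ∈ tsupport u, ContDiffAt ℝ 1 (fun x => (rho x)⁻¹) x := fun x hx =>
    contDiff_rho.contDiffAt.inv (rho_pos (hne x hx)).ne'
  have h2 : ∀ x ∈ tsupport u, ContDiffAt ℝ 1 (fun x => (la R x)⁻¹) x := fun x hx =>
    (contDiffAt_la R (hne x hx)).inv (by linarith [one_le_la hRpos (hne x hx) (hle x hx)])
  have h3 : ∀ x ∈ tsupport u, ContDiffAt ℝ 1 (fun x => (1 + log (la R x))⁻¹) x := fun x hx =>
    (contDiffAt_lb hRpos (hne x hx) (hle x hx)).inv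
      (by linarith [one_le_lb hRpos (hne x hx) (hle x hx)])
  have hBi : Integrable fun x => u x ^ 2 * (rho x)⁻¹ ^ 2 * (la R x)⁻¹ ^ 2 := by
    refine (contDiff_of_vanish hKc (fun x hx => ?_) ?_).continuous.integrable_of_hasCompactSupport
      (hcs _ ?_)
    · exact (((hsU x).pow 2).mul ((h1 x hx).pow 2)).mul ((h2 x hx).pow 2)
    all_goals intro x hx; simp [hu0 x hx]
  have hCi : Integrable fun x =>
      u x ^ 2 * (rho x)⁻¹ ^ 2 * (la R x)⁻¹ ^ 2 * (1 + log (la R x))⁻¹ ^ 2 := by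
    refine (contDiff_of_vanish hKc (fun x hx => ?_) ?_).continuous.integrable_of_hasCompactSupport
      (hcs _ ?_)
    · exact ((((hsU x).pow 2).mul ((h1 x hx).pow 2)).mul ((h2 x hx).pow 2)).mul ((h3 x hx).pow 2)
    all_goals intro x hx; simp [hu0 x hx]
  have hAi : Integrable fun x => lap u x ^ 2 :=
    (hlapc.pow 2).integrable_of_hasCompactSupport
      (hcs _ fun x hx => by simp [hlap0 x hx])
  have hDi : Integrable fun x => ∑ i, fderiv ℝ (fld R u i) x (bv i) :=
    integrable_finsetSum _ fun i _ => (hfldi i).1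
  have hD0 : ∫ x, ∑ i, fderiv ℝ (fld R u i) x (bv i) = 0 := by
    rw [integral_finsetSum _ fun i _ => (hfldi i).1]
    exact Finset.sum_eq_zero fun i _ => (hfldi i).2
  have hpt : ∀ x, u x ^ 2 * (rho x)⁻¹ ^ 2 * (la R x)⁻¹ ^ 2 * (1 + log (la R x))⁻¹ ^ 2
      ≤ lap u x ^ 2 - u x ^ 2 * (rho x)⁻¹ ^ 2 * (la R x)⁻¹ ^ 2
        - ∑ i, fderiv ℝ (fld R u i) x (bv i) := fun x => by
    by_cases hx : x ∈ tsupport u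
    · have hk : (∑ j, x j ^ 2) * (rho x)⁻¹ = 1 := mul_inv_cancel₀ (rho_pos (hne x hx)).ne'
      have hid := fieldDeriv_identity (fun j => x j) (fun j => pd u j x)
        (fun j l => fderiv ℝ (pd u j) x (bv l)) (rho x)⁻¹ (la R x) (1 + log (la R x)) (u x)
        (fun i j => pd_symm hsmooth i j x) hk
      rw [Finset.sum_congr rfl fun i _ =>
        fderiv_fld hRpos hsmooth i (hne x hx) (hle x hx), hlap]
      refine sub_nonneg.1 (le_of_le_of_eq ?_ (hid.symm.trans (by ring)))
      positivity
    · have : ∀ i, fderiv ℝ (fld R u i) x = 0 := fun i => by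
        have : fld R u i =ᶠ[nhds x] fun _ => 0 := by
          filter_upwards [hKc.isOpen_compl.mem_nhds hx] with y hy using hfld0 i y hy
        rw [this.fderiv_eq]; simp
      simp [this, hu0 x hx, hlap0 x hx]
  have hout : ∀ x ∉ Ω, x ∉ tsupport u := fun x hx h => hx (hsupp h).1
  simp only [hB, hC]
  rw [setIntegral_eq_integral_of_forall_compl_eq_zero (fun x hx => by simp [hu0 x (hout x hx)]),
    setIntegral_eq_integral_of_forall_compl_eq_zero (fun x hx => by simp [hlap0 x (hout x hx)]),
    setIntegral_eq_integral_of_forall_compl_eq_zero (fun x hx => by simp [hu0 x (hout x hx)])]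
  calc _ ≤ ∫ x, (lap u x ^ 2 - u x ^ 2 * (rho x)⁻¹ ^ 2 * (la R x)⁻¹ ^ 2
        - ∑ i, fderiv ℝ (fld R u i) x (bv i)) :=
        integral_mono hCi ((hAi.sub hBi).sub hDi) hpt
    _ = _ := by rw [integral_sub (by exact hAi.sub hBi) hDi, integral_sub hAi hBi, hD0, sub_zero]
end
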